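/- In F_2[T], the sum ∑_{P ∈ P_1} 1/(P³ − 1) over all monic irreducible polynomials P, interpreted as a convergent sum of formal Laurent series in T^{-1}, equals the rational function 1/(T⁴ + T²). -/

import Mathlib

/-!
Write `S = ∑ 1 / n³` over the nonzero `n ∈ F₂[T]`, let `E` be the sum of `1 / (a b)³` over unordered
pairs `{a, b}` of distinct nonzero polynomials, and let `L` be the sum in the theorem.

*Arithmetic.* Expanding `1 / (P³ - 1)` as a geometric series gives `L = ∑ 1 / (P ^ (j + 1))³`, and
`S² = ∑ 1 / (a²)³` in characteristic two. Hence the coefficient of `1 / n³` in `L S²` is the number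
of `(P, j)` for which `n` is `P ^ (j + 1)` times a square, while in `E` it is the number of unordered
factorizations of `n` into distinct factors. These numbers agree modulo 2
(`card_primeSq_mod_two`): twice either of them, plus the indicator of `n` being a square, is the
number of divisors of `n` modulo 4, by multiplicativity (`card_divs_mod_four`). Thus `L S² = E`
(`primePowers_mul_sq`).

*Symmetric functions.* The polynomial `∏ (Y + a)` over `deg a < d` is additive (Carlitz), so only
the monomials `Y ^ (2 ^ i)` occur in it. Consequently the elementary symmetric functions `e₂`, `e₄`,
`e₅`, `e₆` of the inverses of the nonzero such `a` vanish, and Newton's identities express the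
partial sums of `S` and `E` as `e₁³ + e₃` and `e₃²` (`sum_cubes`, `sum_pairs_cubes`). The recursions for the
coefficients relate `e₁³` to `(T² + T + 1) e₃` by a factor tending to `1` (`co_relation`), so in the
limit `S² = (T² + T)² E` (`pairSum_mul`).

As `S` is a `T⁻¹`-adic unit (`val_zetaPart`), the two relations give `L = 1 / (T² + T)²`.
-/

open Polynomial

/-- The element `T` inside the field of formal Laurent series in `T⁻¹`. -/
noncomputable def TT (F : Type) [Field F] : LaurentSeries F := HahnSeries.single (-1) 1

/-- The embedding of `F[T]` into `K̂ = F((T⁻¹))`. -/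
noncomputable def polyEmb (F : Type) [Field F] : Polynomial F →+* LaurentSeries F :=
  Polynomial.eval₂RingHom HahnSeries.C (TT F)

namespace ThakurSum

local notation "𝔸" => Polynomial (ZMod 2)

/-! ### Counting factorizations modulo 4 -/

lemma monic_of_ne_zero {n : 𝔸} (hn : n ≠ 0) : n.Monic := by
  have h : n.leadingCoeff ≠ 0 := by simpa using hn
  have key : ∀ c : ZMod 2, c ≠ 0 → c = 1 := by decide
  exact key _ h

lemma eq_of_associated {m n : 𝔸} (h : Associated m n) : m = n := by
  by_cases hm : m = 0
  · subst hm; exact ((associated_zero_iff_eq_zero n).1 h.symm).symm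
  · have hn : n ≠ 0 := fun h0 => hm (by subst h0; exact (associated_zero_iff_eq_zero m).1 h)
    exact Polynomial.eq_of_monic_of_associated (monic_of_ne_zero hm) (monic_of_ne_zero hn) h

lemma eq_one_of_isUnit {u : 𝔸} (h : IsUnit u) : u = 1 :=
  eq_of_associated (associated_one_iff_isUnit.2 h)

lemma sq_injective {a b : 𝔸} (h : a ^ 2 = b ^ 2) : a = b := by
  have h2 : (a - b) ^ 2 = 0 := by
    rw [sub_pow_char, h, sub_self]
  exact sub_eq_zero.1 (pow_eq_zero_iff two_ne_zero |>.1 h2)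

/-- The pairs `(P, j)` with `P` irreducible such that `n` is `P ^ (j + 1)` times a square. -/
def primeSq (n : 𝔸) : Set (𝔸 × ℕ) :=
  {q | Irreducible q.1 ∧ ∃ a, q.1 ^ (q.2 + 1) * a ^ 2 = n}

/-- The set of divisors of `n`. -/
def divs (n : 𝔸) : Set 𝔸 := {a | a ∣ n}

open Classical in
/-- The indicator function of the squares, valued in `ℕ`. -/
noncomputable def sqInd (n : 𝔸) : ℕ := if IsSquare n then 1 else 0

lemma divs_finite {n : 𝔸} (hn : n ≠ 0) : (divs n).Finite := by
  have : Fintype 𝔸ˣ := @Unique.fintype _ ⟨⟨1⟩, fun u => Units.ext (eq_one_of_isUnit u.isUnit)⟩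
  have := UniqueFactorizationMonoid.fintypeSubtypeDvd n hn
  exact Finite.of_fintype {a // a ∣ n}

lemma irr_dvd {n : 𝔸} {q : 𝔸 × ℕ} (hq : q ∈ primeSq n) : q.1 ∣ n := by
  obtain ⟨-, a, rfl⟩ := hq
  exact Dvd.dvd.mul_right (dvd_pow_self _ (Nat.succ_ne_zero _)) _

lemma pow_inj {p q : 𝔸} (hp : Irreducible p) (hq : Irreducible q) {i j : ℕ}
    (h : p ^ (i + 1) = q ^ (j + 1)) : p = q ∧ i = j := by
  have hpq : p ∣ q := hp.prime.dvd_of_dvd_pow (h ▸ dvd_pow_self p (Nat.succ_ne_zero i))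
  have hpq : p = q := eq_of_associated (hp.associated_of_dvd hq hpq)
  subst hpq
  exact ⟨rfl, Nat.succ_injective ((pow_inj_of_not_isUnit hp.not_isUnit hp.ne_zero).1 h)⟩

lemma primeSq_finite {n : 𝔸} (hn : n ≠ 0) : (primeSq n).Finite := by
  refine Set.Finite.of_finite_image (f := fun q : 𝔸 × ℕ => q.1 ^ (q.2 + 1))
    ((divs_finite hn).subset ?_) ?_
  · rintro _ ⟨q, ⟨-, a, rfl⟩, rfl⟩
    exact Dvd.intro _ rfl
  · rintro q hq r hr h
    obtain ⟨h1, h2⟩ := pow_inj hq.1 hr.1 h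
    exact Prod.ext h1 h2

lemma isSquare_mul_iff {x y : 𝔸} (h : IsCoprime x y) :
    IsSquare (x * y) ↔ IsSquare x ∧ IsSquare y := by
  refine ⟨?_, fun h => h.1.mul h.2⟩
  rintro ⟨c, hc⟩
  have key : ∀ {x y : 𝔸}, IsCoprime x y → x * y = c * c → IsSquare x := by
    intro x y h hc
    obtain ⟨d, hd⟩ := exists_associated_pow_of_mul_eq_pow' h (hc.trans (sq c).symm)
    exact ⟨d, by rw [← eq_of_associated hd, sq]⟩
  exact ⟨key h hc, key h.symm (by rw [mul_comm, hc])⟩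

lemma sqInd_mul {x y : 𝔸} (h : IsCoprime x y) : sqInd (x * y) = sqInd x * sqInd y := by
  unfold sqInd
  rw [isSquare_mul_iff h]
  by_cases hx : IsSquare x <;> by_cases hy : IsSquare y <;> simp [hx, hy]

lemma card_divs_mul {x y : 𝔸} (h : IsCoprime x y) :
    (divs (x * y)).ncard = (divs x).ncard * (divs y).ncard := by
  rw [← Set.ncard_prod]
  symm
  refine Set.ncard_congr (fun p _ => p.1 * p.2) ?_ ?_ ?_
  · rintro ⟨a, b⟩ ⟨ha, hb⟩
    exact mul_dvd_mul ha hb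
  · rintro ⟨a, b⟩ ⟨c, d⟩ ⟨ha, hb⟩ ⟨hc, hd⟩ hab
    have key : ∀ {x y a b c d : 𝔸}, IsCoprime x y → a ∣ x → d ∣ y → a * b = c * d → a ∣ c :=
      fun h ha hd e =>
        ((h.of_isCoprime_of_dvd_left ha).of_isCoprime_of_dvd_right hd).dvd_of_dvd_mul_right
          (e ▸ Dvd.intro _ rfl)
    simp only [divs, Set.mem_ofPred_eq] at ha hb hc hd hab
    have h1 := key h ha hd hab
    have h2 := key h hc hb hab.symm
    have h3 : b ∣ d := key h.symm hb hc (by rw [mul_comm b, hab, mul_comm c])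
    have h4 : d ∣ b := key h.symm hd ha (by rw [mul_comm d, ← hab, mul_comm a])
    exact Prod.ext (eq_of_associated (associated_of_dvd_dvd h1 h2))
      (eq_of_associated (associated_of_dvd_dvd h3 h4))
  · intro c hc
    obtain ⟨a, b, ha, hb, rfl⟩ := exists_dvd_and_dvd_of_dvd_mul (show c ∣ x * y from hc)
    exact ⟨(a, b), ⟨ha, hb⟩, rfl⟩

lemma mem_primeSq_mul {x y : 𝔸} (h : IsCoprime x y) (q : 𝔸 × ℕ) (hq : q.1 ∣ x) :
    q ∈ primeSq (x * y) ↔ q ∈ primeSq x ∧ IsSquare y := by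
  constructor
  · rintro ⟨hi, a, ha⟩
    have hcop : IsCoprime (q.1 ^ (q.2 + 1)) y := (h.of_isCoprime_of_dvd_left hq).pow_left
    obtain ⟨x', rfl⟩ : q.1 ^ (q.2 + 1) ∣ x := hcop.dvd_of_dvd_mul_right (ha ▸ Dvd.intro _ rfl)
    have h0 : q.1 ^ (q.2 + 1) ≠ 0 := pow_ne_zero _ hi.ne_zero
    have h1 : x' * y = a ^ 2 := by
      apply mul_left_cancel₀ h0
      rw [ha, mul_assoc]
    have h2 := (isSquare_mul_iff (h.of_mul_left_right)).1 ⟨a, by rw [h1, sq]⟩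
    obtain ⟨⟨b, rfl⟩, hy⟩ := h2
    exact ⟨⟨hi, b, by rw [sq]⟩, hy⟩
  · rintro ⟨⟨hi, a, rfl⟩, b, rfl⟩
    exact ⟨hi, a * b, by ring⟩

lemma card_primeSq_mul {x y : 𝔸} (h : IsCoprime x y) (hx : x ≠ 0) (hy : y ≠ 0) :
    (primeSq (x * y)).ncard = (primeSq x).ncard * sqInd y + (primeSq y).ncard * sqInd x := by
  have hunion : primeSq (x * y) = {q | q ∈ primeSq x ∧ IsSquare y} ∪
      {q | q ∈ primeSq y ∧ IsSquare x} := by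
    ext q
    have hyx := mem_primeSq_mul h.symm q
    rw [mul_comm y x] at hyx
    constructor
    · intro hq
      rcases hq.1.prime.dvd_or_dvd (irr_dvd hq) with hd | hd
      · exact Or.inl ((mem_primeSq_mul h q hd).1 hq)
      · exact Or.inr ((hyx hd).1 hq)
    · rintro (hq | hq)
      · exact (mem_primeSq_mul h q (irr_dvd hq.1)).2 hq
      · exact (hyx (irr_dvd hq.1)).2 hq
  have hdis : Disjoint {q | q ∈ primeSq x ∧ IsSquare y} {q | q ∈ primeSq y ∧ IsSquare x} := by
    rw [Set.disjoint_left]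
    rintro q ⟨hq, -⟩ ⟨hq', -⟩
    exact hq.1.not_isUnit (h.isUnit_of_dvd' (irr_dvd hq) (irr_dvd hq'))
  have hcard : ∀ {x y : 𝔸}, ({q | q ∈ primeSq x ∧ IsSquare y} : Set (𝔸 × ℕ)).ncard =
      (primeSq x).ncard * sqInd y := by
    intro x y
    by_cases hs : IsSquare y <;> simp [sqInd, hs]
  rw [hunion, Set.ncard_union_eq hdis ((primeSq_finite hx).subset fun q hq => hq.1)
    ((primeSq_finite hy).subset fun q hq => hq.1), hcard, hcard]

lemma isSquare_prime_pow_iff {p : 𝔸} (hp : Irreducible p) (i : ℕ) :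
    IsSquare (p ^ i) ↔ Even i := by
  constructor
  · rintro ⟨c, hc⟩
    obtain ⟨j, hj, hcj⟩ := (dvd_prime_pow hp.prime i).1 (Dvd.intro _ hc.symm)
    rw [eq_of_associated hcj, ← pow_add] at hc
    exact ⟨j, (pow_inj_of_not_isUnit hp.not_isUnit hp.ne_zero).1 hc⟩
  · exact fun h => h.isSquare_pow p

lemma divs_prime_pow {p : 𝔸} (hp : Irreducible p) (i : ℕ) :
    (divs (p ^ i)).ncard = i + 1 := by
  have : divs (p ^ i) = (fun j => p ^ j) '' (Finset.range (i + 1) : Set ℕ) := by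
    ext a
    simp only [divs, Set.mem_ofPred_eq, dvd_prime_pow hp.prime, Set.mem_image, Finset.coe_range,
      Set.mem_Iio, Nat.lt_succ_iff]
    exact ⟨fun ⟨j, hj, h⟩ => ⟨j, hj, (eq_of_associated h).symm⟩,
      fun ⟨j, hj, h⟩ => ⟨j, hj, h ▸ Associated.refl _⟩⟩
  rw [this, Set.ncard_image_of_injective _
    (fun a b h => (pow_inj_of_not_isUnit hp.not_isUnit hp.ne_zero).1 h), Set.ncard_coe_finset,
    Finset.card_range]

lemma primeSq_prime_pow {p : 𝔸} (hp : Irreducible p) (i : ℕ) :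
    (primeSq (p ^ i)).ncard = (i + 1) / 2 := by
  -- `p ^ i = p ^ (j + 1) * (p ^ m) ^ 2` exactly when `j = i - 2 * m - 1`
  have : primeSq (p ^ i) = (fun m => (p, i - 2 * m - 1)) ''
      (Finset.range ((i + 1) / 2) : Set ℕ) := by
    ext ⟨q, j⟩
    simp only [Set.mem_image, Finset.coe_range, Set.mem_Iio, Prod.mk.injEq]
    constructor
    · intro hq
      have hqp : q = p := eq_of_associated
        (hq.1.associated_of_dvd hp (hq.1.prime.dvd_of_dvd_pow (irr_dvd hq)))
      subst hqp
      obtain ⟨-, a, ha⟩ := hq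
      obtain ⟨m, hm, ham⟩ := (dvd_prime_pow hp.prime i).1
        ((dvd_pow_self a two_ne_zero).trans (Dvd.intro_left _ ha))
      dsimp only at ha
      rw [eq_of_associated ham, ← pow_mul, ← pow_add] at ha
      have := (pow_inj_of_not_isUnit hp.not_isUnit hp.ne_zero).1 ha
      exact ⟨m, by omega, rfl, by omega⟩
    · rintro ⟨m, hm, rfl, rfl⟩
      refine ⟨hp, p ^ m, ?_⟩
      dsimp only
      rw [← pow_mul, ← pow_add]
      congr 1
      omega
  rw [this, Set.InjOn.ncard_image, Set.ncard_coe_finset, Finset.card_range]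
  intro a ha b hb hab
  simp only [Finset.coe_range, Set.mem_Iio, Prod.mk.injEq] at ha hb hab
  omega

/-- The divisor count of `n` modulo 4. The identity is exact on prime powers; it passes to products
of coprime factors because the cross term, a product of two terms divisible by 2, vanishes. -/
lemma card_divs_mod_four (n : 𝔸) (hn : n ≠ 0) :
    ((divs n).ncard : ZMod 4) = 2 * (primeSq n).ncard + sqInd n := by
  have h4 : (4 : ZMod 4) = 0 := by decide
  have hpow : ∀ {p : 𝔸} (i : ℕ), Prime p →
      ((divs (p ^ i)).ncard : ZMod 4) = 2 * (primeSq (p ^ i)).ncard + sqInd (p ^ i) := by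
    intro p i hp
    have hp := hp.irreducible
    rw [divs_prime_pow hp, primeSq_prime_pow hp]
    unfold sqInd
    rw [isSquare_prime_pow_iff hp]
    have : i + 1 = 2 * ((i + 1) / 2) + if Even i then 1 else 0 := by
      split_ifs with h <;> simp only [Nat.even_iff] at h <;> omega
    conv_lhs => rw [this]
    push_cast
    rfl
  induction n using UniqueFactorizationMonoid.induction_on_coprime with
  | h0 => exact absurd rfl hn
  | h1 hx =>
    rw [eq_one_of_isUnit hx]
    simpa using hpow 0 (Polynomial.prime_X)
  | hpr i hp => exact hpow i hp
  | @hcp x y hxy ihx ihy =>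
    have hx := left_ne_zero_of_mul hn
    have hy := right_ne_zero_of_mul hn
    have hc : IsCoprime x y := hxy.isCoprime
    rw [card_divs_mul hc, card_primeSq_mul hc hx hy, sqInd_mul hc]
    push_cast
    rw [ihx hx, ihy hy]
    linear_combination ((primeSq x).ncard * (primeSq y).ncard : ZMod 4) * h4

instance : Countable 𝔸 := by
  rw [← Cardinal.mk_le_aleph0_iff]
  exact Polynomial.cardinalMk_le_max.trans (max_le Cardinal.mk_le_aleph0 le_rfl)

/-- An arbitrary enumeration of `F₂[T]`, used to single out one ordering of each unordered pair. -/
noncomputable def enc : 𝔸 → ℕ := (Countable.exists_injective_nat 𝔸).choose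

lemma enc_injective : Function.Injective enc := (Countable.exists_injective_nat 𝔸).choose_spec

/-- The factorizations of `n` into an unordered pair of distinct factors. -/
def pairs (n : 𝔸) : Set (𝔸 × 𝔸) := {p | enc p.1 < enc p.2 ∧ p.1 * p.2 = n}

lemma card_divs_eq (n : 𝔸) (hn : n ≠ 0) :
    (divs n).ncard = 2 * (pairs n).ncard + sqInd n := by
  have h1 : (divs n).ncard = ({p : 𝔸 × 𝔸 | p.1 * p.2 = n}).ncard := by
    symm
    refine Set.ncard_congr (fun p _ => p.1) (fun p hp => Dvd.intro _ hp) ?_ ?_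
    · rintro ⟨a, b⟩ ⟨c, d⟩ h h' hac
      simp only [Set.mem_ofPred_eq] at h h' hac
      subst hac
      have ha : a ≠ 0 := by rintro rfl; exact hn (by simpa using h.symm)
      rw [mul_left_cancel₀ ha (h.trans h'.symm)]
    · rintro a ⟨b, rfl⟩
      exact ⟨(a, b), rfl, rfl⟩
  have hfin : ({p : 𝔸 × 𝔸 | p.1 * p.2 = n}).Finite :=
    ((divs_finite hn).prod (divs_finite hn)).subset
      fun p hp => ⟨Dvd.intro _ hp, Dvd.intro_left _ hp⟩
  have h2 : {p : 𝔸 × 𝔸 | p.1 * p.2 = n} =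
      (pairs n ∪ Prod.swap '' pairs n) ∪ {p | p.1 = p.2 ∧ p.1 * p.2 = n} := by
    ext ⟨a, b⟩
    simp only [pairs, Set.mem_union, Set.mem_image, Set.mem_ofPred_eq, Prod.exists,
      Prod.swap_prod_mk, Prod.mk.injEq]
    constructor
    · intro h
      rcases lt_trichotomy (enc a) (enc b) with hl | he | hg
      · exact Or.inl (Or.inl ⟨hl, h⟩)
      · exact Or.inr ⟨enc_injective he, h⟩
      · exact Or.inl (Or.inr ⟨b, a, ⟨hg, by rw [mul_comm, h]⟩, rfl, rfl⟩)
    · rintro ((h | ⟨c, d, h, rfl, rfl⟩) | h)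
      · exact h.2
      · rw [mul_comm, h.2]
      · exact h.2
  have hd1 : Disjoint (pairs n) (Prod.swap '' pairs n) := by
    rw [Set.disjoint_left]
    rintro _ hq ⟨⟨a, b⟩, hab, rfl⟩
    exact lt_asymm hq.1 hab.1
  have hd2 : Disjoint (pairs n ∪ Prod.swap '' pairs n) {p | p.1 = p.2 ∧ p.1 * p.2 = n} := by
    rw [Set.disjoint_left]
    rintro ⟨a, b⟩ (h | ⟨⟨c, d⟩, h, hcd⟩) ⟨e, -⟩
    · exact absurd h.1 (by simp only at e; simp [e])
    · simp only [Prod.swap_prod_mk, Prod.mk.injEq] at hcd e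
      exact absurd h.1 (by simp [hcd, e])
  have hsub : ∀ s : Set (𝔸 × 𝔸), s ⊆ {p | p.1 * p.2 = n} → s.Finite := fun s hs => hfin.subset hs
  have hdiag : ({p : 𝔸 × 𝔸 | p.1 = p.2 ∧ p.1 * p.2 = n}).ncard = sqInd n := by
    unfold sqInd
    split_ifs with h
    · obtain ⟨a, rfl⟩ := h
      rw [Set.ncard_eq_one]
      refine ⟨(a, a), ?_⟩
      ext ⟨b, c⟩
      simp only [Set.mem_ofPred_eq, Set.mem_singleton_iff, Prod.mk.injEq]
      constructor
      · rintro ⟨rfl, h⟩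
        have := sq_injective (a := b) (b := a) (by rw [sq, sq, h])
        exact ⟨this, this⟩
      · rintro ⟨rfl, rfl⟩
        exact ⟨rfl, rfl⟩
    · have : {p : 𝔸 × 𝔸 | p.1 = p.2 ∧ p.1 * p.2 = n} = ∅ := by
        ext ⟨b, c⟩
        simp only [Set.mem_ofPred_eq, Set.mem_empty_iff_false, iff_false]
        rintro ⟨rfl, hb⟩
        exact h ⟨b, hb.symm⟩
      rw [this, Set.ncard_empty]
  have hu : (pairs n ∪ Prod.swap '' pairs n) ⊆ {p | p.1 * p.2 = n} := h2 ▸ Set.subset_union_left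
  rw [h1, h2, Set.ncard_union_eq hd2 (hsub _ hu) (hsub _ fun p hp => hp.2),
    Set.ncard_union_eq hd1 (hsub _ (Set.subset_union_left.trans hu))
      (hsub _ (Set.subset_union_right.trans hu)), hdiag,
    Set.ncard_image_of_injective _ Prod.swap_injective]
  ring

/-- The two ways of counting factorizations of `n` agree modulo 2. -/
lemma card_primeSq_mod_two (n : 𝔸) (hn : n ≠ 0) :
    ((primeSq n).ncard : ZMod 2) = (pairs n).ncard := by
  have h := card_divs_mod_four n hn
  rw [card_divs_eq n hn] at h
  push_cast at h
  have h := add_right_cancel h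
  have h : ((2 * (pairs n).ncard : ℕ) : ZMod 4) = ((2 * (primeSq n).ncard : ℕ) : ZMod 4) := by
    push_cast; exact h
  rw [ZMod.natCast_eq_natCast_iff'] at h
  rw [ZMod.natCast_eq_natCast_iff']
  omega

/-! ### Symmetric functions of the cubes -/

section Symmetric

open Finset

variable {ι R : Type*} [CommRing R]

lemma coeff_linear_mul (x : R) (Q : Polynomial R) (k : ℕ) :
    ((1 + C x * X) * Q).coeff (k + 1) = Q.coeff (k + 1) + x * Q.coeff k := by
  rw [add_mul, one_mul, coeff_add, mul_assoc, coeff_C_mul, coeff_X_mul]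

lemma coeff_zero_prod (f : ι → R) (s : Finset ι) :
    (∏ i ∈ s, (1 + C (f i) * X)).coeff 0 = 1 := by
  simp [coeff_zero_eq_eval_zero, eval_prod]

/-- The power sum `p₃` in terms of elementary symmetric functions. -/
lemma sum_cubes [DecidableEq ι] (f : ι → R) (s : Finset ι) (E : Polynomial R)
    (hE : E = ∏ i ∈ s, (1 + C (f i) * X)) :
    ∑ i ∈ s, f i ^ 3 = E.coeff 1 ^ 3 - 3 * E.coeff 1 * E.coeff 2 + 3 * E.coeff 3 := by
  subst hE
  induction s using Finset.induction_on with
  | empty => simp [coeff_one]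
  | insert a s ha ih =>
    simp only [sum_insert ha, prod_insert ha, coeff_linear_mul, coeff_zero_prod, ih]
    ring

lemma sum_pairs_insert [DecidableEq ι] (e : ι → ℕ) (he : Function.Injective e) (f : ι → R)
    (s : Finset ι) (a : ι) (ha : a ∉ s) :
    ∑ p ∈ insert a s ×ˢ insert a s, (if e p.1 < e p.2 then (f p.1 * f p.2) ^ 3 else 0) =
      ∑ p ∈ s ×ˢ s, (if e p.1 < e p.2 then (f p.1 * f p.2) ^ 3 else 0) +
        f a ^ 3 * ∑ i ∈ s, f i ^ 3 := by
  simp only [sum_product, sum_insert ha, lt_irrefl, if_false, zero_add, sum_add_distrib]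
  have h : ∑ j ∈ s, (if e a < e j then (f a * f j) ^ 3 else 0) +
      ∑ i ∈ s, (if e i < e a then (f i * f a) ^ 3 else 0) = f a ^ 3 * ∑ i ∈ s, f i ^ 3 := by
    rw [← sum_add_distrib, mul_sum]
    refine sum_congr rfl fun i hi => ?_
    have hne : e i ≠ e a := fun h => ha (he h ▸ hi)
    rcases lt_or_gt_of_ne hne with h | h
    · rw [if_pos h, if_neg h.asymm]; ring
    · rw [if_pos h, if_neg h.asymm]; ring
  rw [← add_assoc, h, add_comm]

/-- The second elementary symmetric function of the cubes. The formula is the coefficient of `t⁶`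
in `E(t) E(ωt) E(ω²t) = ∏ (1 + f(i)³ t³)`, where `E(t) = ∏ (1 + f(i) t)` and `ω` is a primitive
cube root of unity. -/
lemma sum_pairs_cubes [DecidableEq ι] (e : ι → ℕ) (he : Function.Injective e) (f : ι → R)
    (s : Finset ι) (E : Polynomial R) (hE : E = ∏ i ∈ s, (1 + C (f i) * X)) :
    ∑ p ∈ s ×ˢ s, (if e p.1 < e p.2 then (f p.1 * f p.2) ^ 3 else 0) =
      3 * E.coeff 6 + 3 * E.coeff 3 ^ 2 + 3 * E.coeff 1 ^ 2 * E.coeff 4 + E.coeff 2 ^ 3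
        - 3 * (E.coeff 1 * E.coeff 2 * E.coeff 3 + E.coeff 1 * E.coeff 5
          + E.coeff 2 * E.coeff 4) := by
  subst hE
  induction s using Finset.induction_on with
  | empty => simp [coeff_one]
  | insert a s ha ih =>
    rw [sum_pairs_insert e he f s a ha, ih, sum_cubes f s _ rfl]
    simp only [prod_insert ha, coeff_linear_mul, coeff_zero_prod]
    ring

end Symmetric

/-! ### The additive polynomials of Carlitz -/

/-- The product of `Y + a` over the polynomials `a` of degree less than `d`, as a polynomial in `Y`
over `F₂[T]`, given by the recursion that its additivity entails. -/
noncomputable def carl : ℕ → Polynomial 𝔸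
  | 0 => X
  | d + 1 => carl d ^ 2 + C ((carl d).eval (X ^ d)) * carl d

/-- The value of `carl d` at `T ^ d`: the product of the monic polynomials of degree `d`. -/
noncomputable def carlD (d : ℕ) : 𝔸 := (carl d).eval (X ^ d)

lemma carl_succ (d : ℕ) : carl (d + 1) = carl d ^ 2 + C (carlD d) * carl d := rfl

lemma two_eq_zero_poly : (2 : Polynomial 𝔸) = 0 := CharTwo.two_eq_zero

lemma two_eq_zero_A : (2 : 𝔸) = 0 := CharTwo.two_eq_zero

/-- Additivity of `carl d`. -/
lemma carl_comp_add (d : ℕ) (a : 𝔸) :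
    (carl d).comp (X + C a) = carl d + C ((carl d).eval a) := by
  induction d with
  | zero => simp [carl]
  | succ d ih =>
    simp only [carl_succ, add_comp, pow_comp, mul_comp, C_comp, ih, eval_add, eval_pow, eval_mul,
      eval_C, map_add, map_pow, map_mul]
    linear_combination (carl d * C ((carl d).eval a)) * two_eq_zero_poly

/-- The polynomials of degree less than `d`. -/
noncomputable def smallPoly : ℕ → Finset 𝔸
  | 0 => {0}
  | d + 1 => smallPoly d ∪ (smallPoly d).image (fun a => X ^ d + a)

lemma mem_smallPoly (d : ℕ) (a : 𝔸) : a ∈ smallPoly d ↔ a.degree < d := by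
  induction d generalizing a with
  | zero => simp [smallPoly]
  | succ d ih =>
    simp only [smallPoly, Finset.mem_union, Finset.mem_image, ih]
    constructor
    · rintro (h | ⟨b, hb, rfl⟩)
      · exact h.trans (by exact_mod_cast Nat.lt_succ_self d)
      · refine (degree_add_le _ _).trans_lt (max_lt ?_ ?_)
        · rw [degree_X_pow]; exact_mod_cast Nat.lt_succ_self d
        · exact hb.trans (by exact_mod_cast Nat.lt_succ_self d)
    · intro h
      have hle : a.degree ≤ d := by
        rw [degree_le_iff_coeff_zero]
        intro m hm
        have hm : d + 1 ≤ m := Nat.succ_le_of_lt (by exact_mod_cast hm)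
        exact coeff_eq_zero_of_degree_lt (h.trans_le (by exact_mod_cast hm))
      rcases hle.lt_or_eq with h1 | h1
      · exact Or.inl h1
      · refine Or.inr ⟨X ^ d + a, ?_, ?_⟩
        · have ha : a ≠ 0 := by rintro rfl; simp at h1
          have h2 := degree_sub_lt_left (p := a) (q := X ^ d) (by rw [h1, degree_X_pow]) ha
            (by rw [(monic_of_ne_zero ha).leadingCoeff, (monic_X_pow d).leadingCoeff])
          rw [CharTwo.sub_eq_add, add_comm, h1] at h2
          exact h2
        · rw [← add_assoc, CharTwo.add_self_eq_zero, zero_add]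

lemma prod_smallPoly (d : ℕ) : ∏ a ∈ smallPoly d, (X + C a) = carl d := by
  induction d with
  | zero => simp [smallPoly, carl]
  | succ d ih =>
    have hdis : Disjoint (smallPoly d) ((smallPoly d).image (fun a => X ^ d + a)) := by
      rw [Finset.disjoint_left]
      intro a ha hb
      obtain ⟨b, hb', rfl⟩ := Finset.mem_image.1 hb
      rw [mem_smallPoly] at ha hb'
      rw [degree_add_eq_left_of_degree_lt (by rwa [degree_X_pow]), degree_X_pow] at ha
      exact lt_irrefl _ ha
    rw [smallPoly, Finset.prod_union hdis, Finset.prod_image (fun a _ b _ h => add_left_cancel h),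
      ih, carl_succ]
    have h : ∏ a ∈ smallPoly d, (X + C (X ^ d + a)) = (carl d).comp (X + C (X ^ d)) := by
      rw [← ih, prod_comp]
      refine Finset.prod_congr rfl fun a _ => ?_
      simp only [add_comp, X_comp, C_comp, map_add]
      ring
    rw [h, carl_comp_add, ← carlD]
    ring

/-- Carlitz's bracket `[d] = T ^ (2 ^ d) - T`, written with a plus sign in characteristic two. -/
noncomputable def br (d : ℕ) : 𝔸 := X ^ 2 ^ d + X

lemma br_succ (d : ℕ) : br (d + 1) = br d ^ 2 + X ^ 2 + X := by
  unfold br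
  rw [pow_succ, pow_mul]
  linear_combination (-(X : 𝔸) ^ 2 ^ d * X - X ^ 2) * two_eq_zero_A

/-- The functional equation of `carl` under `Y ↦ T Y`, together with the resulting recursion for
`carlD`; the two are proved by a simultaneous induction. -/
lemma carl_comp_mul (d : ℕ) :
    (carl (d + 1)).comp (C X * X) = C X * carl (d + 1) + C (br (d + 1)) * carl d ^ 2 ∧
      carlD (d + 1) = br (d + 1) * carlD d ^ 2 := by
  have hD : ∀ d, (carl (d + 1)).comp (C X * X) = C X * carl (d + 1) + C (br (d + 1)) * carl d ^ 2 →
      carlD (d + 1) = br (d + 1) * carlD d ^ 2 := by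
    intro d h
    have h' := congrArg (eval (X ^ d)) h
    simp only [eval_comp, eval_mul, eval_C, eval_X, eval_add, eval_pow, carl_succ] at h'
    rw [← carlD] at h'
    have hx : (X : 𝔸) * X ^ d = X ^ (d + 1) := by ring
    rw [hx] at h'
    have : carlD (d + 1) = eval (X ^ (d + 1)) (carl d) ^ 2
        + carlD d * eval (X ^ (d + 1)) (carl d) := by
      rw [carlD, carl_succ]; simp
    rw [this, h']
    linear_combination (X * carlD d ^ 2) * two_eq_zero_A
  induction d with
  | zero =>
    have : (carl (0 + 1)).comp (C X * X) = C X * carl (0 + 1) + C (br (0 + 1)) * carl 0 ^ 2 := by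
      simp only [carl, br, add_comp, pow_comp, mul_comp, C_comp, X_comp, map_add,
        map_pow, zero_add, pow_one]
      linear_combination (-(C X : Polynomial 𝔸) * X ^ 2) * two_eq_zero_poly
    exact ⟨this, hD 0 this⟩
  | succ d ih =>
    obtain ⟨ih, ihD⟩ := ih
    have : (carl (d + 1 + 1)).comp (C X * X) =
        C X * carl (d + 1 + 1) + C (br (d + 1 + 1)) * carl (d + 1) ^ 2 := by
      rw [carl_succ (d + 1), add_comp, pow_comp, mul_comp, C_comp, ih, br_succ (d + 1), ihD,
        carl_succ d]
      simp only [map_add, map_mul, map_pow]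
      generalize carl d = L
      generalize (C (br (d + 1)) : Polynomial 𝔸) = b
      generalize (C (carlD d) : Polynomial 𝔸) = D
      generalize (C X : Polynomial 𝔸) = t
      linear_combination (t * (L ^ 2 + D * L) * b * L ^ 2 - t * (L ^ 2 + D * L) ^ 2
        - b ^ 2 * D * L ^ 3) * two_eq_zero_poly
    exact ⟨this, hD _ this⟩

/-- The coefficients of `carl d` at `Y`, `Y²` and `Y⁴`. -/
noncomputable def co : ℕ → 𝔸 × 𝔸 × 𝔸
  | 0 => (1, 0, 0)
  | d + 1 => (carlD d * (co d).1, carlD d * (co d).2.1 + (co d).1 ^ 2,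
      carlD d * (co d).2.2 + (co d).2.1 ^ 2)

lemma carl_expand (d : ℕ) : ∃ r : Polynomial 𝔸,
    carl d = C (co d).1 * X + C (co d).2.1 * X ^ 2 + C (co d).2.2 * X ^ 4 + X ^ 8 * r := by
  induction d with
  | zero => exact ⟨0, by simp [carl, co]⟩
  | succ d ih =>
    obtain ⟨r, hr⟩ := ih
    refine ⟨C (co d).2.2 ^ 2 + C (carlD d) * r + X ^ 8 * r ^ 2, ?_⟩
    rw [carl_succ, hr]
    simp only [co, map_add, map_mul, map_pow]
    generalize (C (co d).1 : Polynomial 𝔸) = a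
    generalize (C (co d).2.1 : Polynomial 𝔸) = b
    generalize (C (co d).2.2 : Polynomial 𝔸) = c
    linear_combination (a * b * X ^ 3 + a * c * X ^ 5 + a * r * X ^ 9 + b * c * X ^ 6
      + b * r * X ^ 10 + c * r * X ^ 12) * two_eq_zero_poly

lemma carlD_succ (d : ℕ) : carlD (d + 1) = br (d + 1) * carlD d ^ 2 := (carl_comp_mul d).2

lemma carlD_zero : carlD 0 = 1 := by simp [carlD, carl]

lemma br_zero : br 0 = 0 := by simp [br, CharTwo.add_self_eq_zero]

lemma co_two (d : ℕ) : (X ^ 2 + X) * (co (d + 1)).2.1 = br (d + 1) * (co d).1 ^ 2 := by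
  induction d with
  | zero => simp [co, carlD_zero, br_succ, br_zero]
  | succ d ih =>
    have e1 : (co (d + 1 + 1)).2.1 = carlD (d + 1) * (co (d + 1)).2.1 + (co (d + 1)).1 ^ 2 := rfl
    have e2 : (co (d + 1)).1 = carlD d * (co d).1 := rfl
    rw [e1, br_succ (d + 1), carlD_succ]
    linear_combination br (d + 1) * carlD d ^ 2 * ih - br (d + 1) ^ 2 *
      ((co (d + 1)).1 + carlD d * (co d).1) * e2

lemma carlD_co (d : ℕ) :
    (X ^ 2 + X) * (carlD d * (co d).2.1) = br d ^ 2 * (co d).1 ^ 2 := by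
  cases d with
  | zero => simp [co, br_zero]
  | succ d =>
    have e2 : (co (d + 1)).1 = carlD d * (co d).1 := rfl
    rw [carlD_succ, e2]
    linear_combination br (d + 1) * carlD d ^ 2 * co_two d

lemma co_three (d : ℕ) : (X ^ 4 + X) * (co (d + 1)).2.2 = br (d + 1) * (co d).2.1 ^ 2 := by
  induction d with
  | zero => simp [co]
  | succ d ih =>
    have e1 : (co (d + 1 + 1)).2.2 = carlD (d + 1) * (co (d + 1)).2.2 + (co (d + 1)).2.1 ^ 2 := rfl
    have e2 : (co (d + 1)).2.1 = carlD d * (co d).2.1 + (co d).1 ^ 2 := rfl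
    have h := carlD_co d
    have hb : br (d + 1) * (carlD d * (co d).2.1) = br d ^ 2 * (co (d + 1)).2.1 := by
      rw [e2, br_succ d]
      linear_combination h
    have h3 : br (d + 1) ^ 2 + X ^ 4 + X ^ 2 = (br d ^ 2) ^ 2 := by
      rw [br_succ d]
      linear_combination (br d ^ 2 * X ^ 2 + br d ^ 2 * X + X ^ 3 + X ^ 4 + X ^ 2) * two_eq_zero_A
    rw [e1, br_succ (d + 1), carlD_succ]
    linear_combination br (d + 1) * carlD d ^ 2 * ih
      + (br (d + 1) * (carlD d * (co d).2.1) + br d ^ 2 * (co (d + 1)).2.1) * hb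
      - (co (d + 1)).2.1 ^ 2 * h3 + (co (d + 1)).2.1 ^ 2 * X ^ 4 * two_eq_zero_A

/-- The relation between the first and third elementary symmetric functions of the inverses of the
nonzero polynomials of degree less than `d + 2`, with denominators cleared. -/
lemma co_relation (d : ℕ) :
    (co (d + 2)).2.1 ^ 3 * br (d + 1) ^ 4 =
      (X ^ 2 + X + 1) * br (d + 2) ^ 2 * ((co (d + 2)).2.2 * (co (d + 2)).1 ^ 2) := by
  have h1 := co_two (d + 1)
  have h2 := co_two d
  have h3 := co_three (d + 1)
  have e1 : (co (d + 1 + 1)).1 = carlD (d + 1) * (co (d + 1)).1 := rfl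
  have e2 : (co (d + 1)).1 = carlD d * (co d).1 := rfl
  have e3 := carlD_succ d
  have hx : (X ^ 2 + X : 𝔸) ≠ 0 := by
    intro h
    have := congrArg (fun p : 𝔸 => p.coeff 1) h
    simp [coeff_X_pow] at this
  have hx4 : (X ^ 4 + X : 𝔸) = (X ^ 2 + X) * (X ^ 2 + X + 1) := by
    linear_combination (-X ^ 3 - X ^ 2 : 𝔸) * two_eq_zero_A
  apply mul_left_cancel₀ (pow_ne_zero 3 hx)
  calc (X ^ 2 + X) ^ 3 * ((co (d + 2)).2.1 ^ 3 * br (d + 1) ^ 4)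
      = ((X ^ 2 + X) * (co (d + 1 + 1)).2.1) ^ 3 * br (d + 1) ^ 4 := by ring
    _ = br (d + 2) ^ 3 * (co (d + 1)).1 ^ 6 * br (d + 1) ^ 4 := by rw [h1]; ring
    _ = br (d + 2) ^ 3 * (co (d + 1)).1 ^ 2 * (carlD d * (co d).1) ^ 4 * br (d + 1) ^ 4 := by
      rw [← e2]; ring
    _ = br (d + 2) ^ 3 * (br (d + 1) * (co d).1 ^ 2) ^ 2 *
        ((br (d + 1) * carlD d ^ 2) * (co (d + 1)).1) ^ 2 := by ring
    _ = br (d + 2) ^ 2 * ((br (d + 2) * (co (d + 1)).2.1 ^ 2) * (X ^ 2 + X) ^ 2) *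
        (co (d + 2)).1 ^ 2 := by
      rw [← h2, ← e3, ← e1]; ring
    _ = _ := by rw [← h3, hx4]; ring

/-! ### The topology of `K̂` -/

local notation "𝕂" => LaurentSeries (ZMod 2)

local notation "φ" => polyEmb (ZMod 2)

/-- The `T⁻¹`-adic valuation of `K̂`, normalized by `val T = exp 1`. -/
noncomputable abbrev val : Valuation 𝕂 (WithZero (Multiplicative ℤ)) := Valued.v

lemma val_TT : val (TT (ZMod 2)) = WithZero.exp 1 := by
  have := LaurentSeries.valuation_single_zpow (ZMod 2) (-1)
  rwa [neg_neg] at this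

lemma hasBasis_nhds_zero :
    (nhds (0 : 𝕂)).HasBasis (fun _ : ℕ => True) (fun N => {x | val x < WithZero.exp (-N : ℤ)}) := by
  refine ⟨fun s => ?_⟩
  rw [Valued.mem_nhds_zero]
  constructor
  · rintro ⟨γ, hγ⟩
    set g := MonoidWithZeroHom.ValueGroup₀.embedding γ.1 with hg
    have hg0 : g ≠ 0 := by simp [hg]
    refine ⟨(WithZero.log g).natAbs, trivial, fun x hx => hγ ?_⟩
    simp only [Set.mem_ofPred_eq] at hx ⊢
    rw [Valuation.restrict_lt_iff_lt_embedding]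
    refine lt_of_lt_of_le hx ?_
    rw [← hg, ← WithZero.exp_log hg0, WithZero.exp_le_exp, WithZero.log_exp]
    omega
  · rintro ⟨N, -, hN⟩
    obtain ⟨y, hy⟩ := LaurentSeries.valuation_surjective (K := ZMod 2) (WithZero.exp (-N : ℤ))
    have hy0 : val.restrict y ≠ 0 := by
      rw [Ne, Valuation.zero_iff]
      rintro rfl
      rw [map_zero] at hy
      exact WithZero.exp_ne_zero hy.symm
    refine ⟨Units.mk0 _ hy0, fun x hx => hN ?_⟩
    simp only [Set.mem_ofPred_eq, Units.val_mk0] at hx ⊢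
    rw [← hy]
    exact (Valuation.restrict_lt_iff _).1 hx

instance : NonarchimedeanRing 𝕂 where
  is_nonarchimedean U hU := by
    obtain ⟨N, -, hN⟩ := hasBasis_nhds_zero.mem_iff.1 hU
    let V : AddSubgroup 𝕂 := val.ltAddSubgroup (Units.mk0 (WithZero.exp (-N : ℤ)) (by simp))
    have hV : (V : Set 𝕂) = {x | val x < WithZero.exp (-N : ℤ)} := rfl
    refine ⟨⟨V, V.isOpen_of_mem_nhds (g := 0) ?_⟩, hV ▸ hN⟩
    rw [hV]
    exact hasBasis_nhds_zero.mem_of_mem trivial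

lemma two_eq_zero_K : (2 : 𝕂) = 0 := by
  rw [← map_ofNat φ 2, two_eq_zero_A, map_zero]

instance : CharP 𝕂 2 := CharTwo.of_one_ne_zero_of_two_eq_zero one_ne_zero two_eq_zero_K

lemma val_poly {n : 𝔸} (hn : n ≠ 0) : val (φ n) = WithZero.exp (n.natDegree : ℤ) := by
  have hpow : ∀ k : ℕ, val (φ (X ^ k)) = WithZero.exp (k : ℤ) := by
    intro k
    simp only [polyEmb, coe_eval₂RingHom, eval₂_X, map_pow, val_TT]
    rw [← WithZero.exp_nsmul]
    simp
  have hle : ∀ (d : ℕ) (a : 𝔸), a.degree < d → val (φ a) < WithZero.exp (d : ℤ) := by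
    intro d a ha
    rw [a.as_sum_support, map_sum]
    refine Valuation.map_sum_lt _ (by simp) fun i hi => ?_
    have hc : a.coeff i = 1 := by
      have key : ∀ c : ZMod 2, c ≠ 0 → c = 1 := by decide
      exact key _ (mem_support_iff.1 hi)
    rw [hc, monomial_one_right_eq_X_pow, hpow, WithZero.exp_lt_exp]
    have : (i : WithBot ℕ) < d := (le_degree_of_mem_supp i hi).trans_lt ha
    exact_mod_cast this
  have hd := degree_eq_natDegree hn
  have h1 : (n - X ^ n.natDegree).degree < (n.natDegree : WithBot ℕ) := by
    rw [← hd]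
    exact degree_sub_lt_left (by rw [hd, degree_X_pow]) hn
      (by rw [(monic_of_ne_zero hn).leadingCoeff, (monic_X_pow _).leadingCoeff])
  have h2 : φ n = φ (X ^ n.natDegree) + φ (n - X ^ n.natDegree) := by
    rw [← map_add, add_sub_cancel]
  rw [h2, Valuation.map_add_eq_of_lt_left _ (by rw [hpow]; exact hle _ _ h1), hpow]

/-! ### The series over all polynomials -/

/-- The function `n ↦ 1 / n³`, extended by zero to `n = 0`. -/
noncomputable def cubeInv (n : 𝔸) : 𝕂 := (φ n)⁻¹ ^ 3

lemma cubeInv_zero : cubeInv 0 = 0 := by simp [cubeInv]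

lemma cubeInv_mul (a b : 𝔸) : cubeInv (a * b) = cubeInv a * cubeInv b := by
  simp only [cubeInv, map_mul, mul_inv, mul_pow]

lemma cubeInv_pow (a : 𝔸) (k : ℕ) : cubeInv (a ^ k) = cubeInv a ^ k := by
  simp only [cubeInv, map_pow, inv_pow, ← pow_mul, mul_comm]

lemma val_cubeInv {n : 𝔸} (hn : n ≠ 0) :
    val (cubeInv n) = WithZero.exp (-(3 * n.natDegree : ℤ)) := by
  rw [cubeInv, map_pow, map_inv₀, val_poly hn, ← WithZero.exp_neg, ← WithZero.exp_nsmul]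
  congr 1
  simp

lemma polyEmb_ne_zero {n : 𝔸} (hn : n ≠ 0) : φ n ≠ 0 := by
  intro h
  have := val_poly hn
  rw [h, map_zero] at this
  exact WithZero.exp_ne_zero this.symm

lemma summable_cubeInv : Summable cubeInv := by
  refine NonarchimedeanAddGroup.summable_of_tendsto_cofinite_zero
    (hasBasis_nhds_zero.tendsto_right_iff.2 fun N _ => ?_)
  rw [Filter.eventually_cofinite]
  refine (smallPoly (N + 1)).finite_toSet.subset fun n hn => ?_
  rw [Finset.mem_coe, mem_smallPoly]
  by_cases h0 : n = 0
  · simp [h0]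
  · simp only [Set.mem_ofPred_eq, not_lt, val_cubeInv h0, WithZero.exp_le_exp] at hn
    rw [degree_eq_natDegree h0]
    have : n.natDegree < N + 1 := by omega
    exact_mod_cast this

/-- The sum of `1 / n³` over all nonzero polynomials. -/
noncomputable def zetaThree : 𝕂 := ∑' n, cubeInv n

/-- The sum of `1 / (a b)³` over all unordered pairs of distinct polynomials; pairs containing `0`
contribute zero. -/
noncomputable def pairSum : 𝕂 :=
  ∑' p : 𝔸 × 𝔸, if enc p.1 < enc p.2 then cubeInv (p.1 * p.2) else 0

lemma summable_prod : Summable fun p : 𝔸 × 𝔸 => cubeInv (p.1 * p.2) := by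
  simpa only [cubeInv_mul] using summable_cubeInv.mul_of_nonarchimedean summable_cubeInv

lemma pairs_indicator : (fun p : 𝔸 × 𝔸 => if enc p.1 < enc p.2 then cubeInv (p.1 * p.2) else 0) =
    {p : 𝔸 × 𝔸 | enc p.1 < enc p.2}.indicator fun p => cubeInv (p.1 * p.2) := by
  funext p
  by_cases h : enc p.1 < enc p.2 <;> simp [h]

lemma hasSum_pairSum :
    HasSum (fun p : 𝔸 × 𝔸 => if enc p.1 < enc p.2 then cubeInv (p.1 * p.2) else 0) pairSum := by
  refine Summable.hasSum ?_
  rw [pairs_indicator]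
  exact summable_prod.indicator _

/-- A sum of `cubeInv` along a map `m` to `F₂[T]` counts each `n` with the size of its fibre. By
summability only the fibre over `0` can be infinite, and there `cubeInv` vanishes. -/
lemma tsum_fiber {β : Type} (s : Set β) (m : β → 𝔸)
    (hs : Summable fun b : s => cubeInv (m b)) :
    ∑' b : s, cubeInv (m b) = ∑' n, ({b | b ∈ s ∧ m b = n}.ncard : 𝕂) * cubeInv n := by
  have h := hs.hasSum.tsum_fiberwise (fun b : s => m b)
  rw [← h.tsum_eq]
  refine tsum_congr fun n => ?_
  have h1 : ∀ b : ((fun b : s => m b) ⁻¹' {n}), cubeInv (m (b : s)) = cubeInv n := by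
    rintro ⟨b, hb⟩
    exact congrArg cubeInv hb
  rw [tsum_congr h1, tsum_const, nsmul_eq_mul]
  congr 2
  rw [← Nat.card_coe_set_eq]
  refine Nat.card_congr ⟨fun b => ⟨b.1.1, b.1.2, b.2⟩, fun b => ⟨⟨b.1, b.2.1⟩, b.2.2⟩, ?_, ?_⟩
  · intro b; rfl
  · intro b; rfl

/-- The tuples `((P, j), a)` with `P` irreducible. -/
def primeTriples : Set ((𝔸 × ℕ) × 𝔸) := {t | Irreducible t.1.1}

/-- The component `a` of a tuple over `n` is determined by the others, as squaring is injective. -/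
lemma ncard_triples (n : 𝔸) :
    {t : (𝔸 × ℕ) × 𝔸 | t ∈ primeTriples ∧ t.1.1 ^ (t.1.2 + 1) * t.2 ^ 2 = n}.ncard =
      (primeSq n).ncard := by
  refine Set.ncard_congr (fun t _ => t.1) ?_ ?_ ?_
  · rintro ⟨q, a⟩ ⟨h1, h2⟩
    exact ⟨h1, a, h2⟩
  · rintro ⟨q, a⟩ ⟨r, b⟩ ⟨h1, h2⟩ ⟨h3, h4⟩ h
    dsimp only at h h2 h4
    subst h
    have h5 : q.1 ^ (q.2 + 1) ≠ 0 := pow_ne_zero _ (Irreducible.ne_zero h1)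
    rw [sq_injective (mul_left_cancel₀ h5 (h2.trans h4.symm))]
  · rintro q ⟨h1, a, h2⟩
    exact ⟨(q, a), ⟨h1, h2⟩, rfl⟩

/-- The pairs `(P, j)` with `P` irreducible. -/
def primePowers : Set (𝔸 × ℕ) := {q | Irreducible q.1}

lemma summable_primePowers :
    Summable fun q : primePowers => cubeInv (q.1.1 ^ (q.1.2 + 1)) := by
  refine summable_cubeInv.comp_injective (i := fun q : primePowers => q.1.1 ^ (q.1.2 + 1)) ?_
  rintro ⟨q, hq⟩ ⟨r, hr⟩ h
  obtain ⟨h1, h2⟩ := pow_inj hq hr h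
  exact Subtype.ext (Prod.ext h1 h2)

lemma summable_squares : Summable fun a : 𝔸 => cubeInv (a ^ 2) :=
  summable_cubeInv.comp_injective fun _ _ h => sq_injective h

lemma tsum_squares : ∑' a : 𝔸, cubeInv (a ^ 2) = zetaThree ^ 2 := by
  have h := summable_cubeInv.hasSum.map (frobenius 𝕂 2) (continuous_pow 2)
  simp only [Function.comp_def, frobenius_def, ← cubeInv_pow] at h
  exact h.tsum_eq

lemma pairSum_eq : pairSum = ∑' n, ((pairs n).ncard : 𝕂) * cubeInv n := by
  have hp : Summable fun p : {p : 𝔸 × 𝔸 | enc p.1 < enc p.2} => cubeInv (p.1.1 * p.1.2) :=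
    summable_prod.subtype _
  have h := tsum_fiber _ (fun p : 𝔸 × 𝔸 => p.1 * p.2) hp
  rw [tsum_subtype _ fun p : 𝔸 × 𝔸 => cubeInv (p.1 * p.2), ← pairs_indicator] at h
  exact h

lemma summable_primePowers_sq : Summable fun t : primePowers × 𝔸 =>
    cubeInv (t.1.1.1 ^ (t.1.1.2 + 1) * t.2 ^ 2) := by
  simpa only [cubeInv_mul] using summable_primePowers.mul_of_nonarchimedean summable_squares

lemma tsum_primePowers_sq : ∑' t : primePowers × 𝔸, cubeInv (t.1.1.1 ^ (t.1.1.2 + 1) * t.2 ^ 2) =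
    ∑' n, ((primeSq n).ncard : 𝕂) * cubeInv n := by
  let e : primePowers × 𝔸 ≃ primeTriples :=
    ⟨fun t => ⟨(t.1.1, t.2), t.1.2⟩, fun t => (⟨t.1.1, t.2⟩, t.1.2), fun _ => rfl, fun _ => rfl⟩
  have hs : Summable fun t : primeTriples => cubeInv (t.1.1.1 ^ (t.1.1.2 + 1) * t.1.2 ^ 2) :=
    e.summable_iff.1 summable_primePowers_sq
  have h := tsum_fiber _ (fun t : (𝔸 × ℕ) × 𝔸 => t.1.1 ^ (t.1.2 + 1) * t.2 ^ 2) hs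
  simp only [ncard_triples] at h
  rw [← h]
  exact e.tsum_eq fun t : primeTriples => cubeInv (t.1.1.1 ^ (t.1.1.2 + 1) * t.1.2 ^ 2)

/-- The product of the sum over prime powers with the sum over squares is compared with `pairSum`
coefficient by coefficient, through `card_primeSq_mod_two`. -/
lemma primePowers_mul_sq :
    (∑' q : primePowers, cubeInv (q.1.1 ^ (q.1.2 + 1))) * zetaThree ^ 2 = pairSum := by
  have h := tsum_mul_tsum_of_nonarchimedean summable_primePowers summable_squares
  simp only [← cubeInv_mul] at h
  rw [← tsum_squares, h, tsum_primePowers_sq, pairSum_eq]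
  refine tsum_congr fun n => ?_
  by_cases hn : n = 0
  · rw [hn, cubeInv_zero, mul_zero, mul_zero]
  · congr 1
    have h := card_primeSq_mod_two n hn
    rw [ZMod.natCast_eq_natCast_iff] at h
    exact (CharP.natCast_eq_natCast 𝕂 2).2 h

/-- The geometric series over the powers of each prime. -/
lemma tsum_primePowers :
    ∑' q : primePowers, cubeInv (q.1.1 ^ (q.1.2 + 1)) =
      ∑' P : {P : Polynomial (ZMod 2) // P.Monic ∧ Irreducible P},
      ((polyEmb (ZMod 2) (P : Polynomial (ZMod 2))) ^ 3 - 1)⁻¹ := by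
  let e : {P : 𝔸 // P.Monic ∧ Irreducible P} × ℕ ≃ primePowers :=
    ⟨fun t => ⟨(t.1.1, t.2), t.1.2.2⟩,
      fun t => (⟨t.1.1, monic_of_ne_zero (Irreducible.ne_zero t.2), t.2⟩, t.1.2),
      fun _ => rfl, fun _ => rfl⟩
  have hs : Summable fun t : {P : 𝔸 // P.Monic ∧ Irreducible P} × ℕ =>
      cubeInv (t.1.1 ^ (t.2 + 1)) := e.summable_iff.2 summable_primePowers
  rw [← e.tsum_eq]
  refine hs.tsum_prod.trans (tsum_congr fun P => ?_)
  have hpow : ∀ j : ℕ, cubeInv (P.1 ^ (j + 1)) = cubeInv P.1 ^ (j + 1) := fun j => cubeInv_pow _ _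
  have h : Summable fun j : ℕ => cubeInv P.1 ^ (j + 1) := by
    simpa only [hpow] using hs.prod_factor P
  have h1 := h.tsum_eq_zero_add
  have h2 : ∑' j : ℕ, cubeInv P.1 ^ (j + 1 + 1) =
      (∑' j : ℕ, cubeInv P.1 ^ (j + 1)) * cubeInv P.1 := by
    rw [← tsum_mul_right]
    rfl
  rw [h2] at h1
  change ∑' j : ℕ, cubeInv (P.1 ^ (j + 1)) = _
  simp only [hpow]
  generalize ∑' j : ℕ, cubeInv P.1 ^ (j + 1) = S at h1
  have hP : φ P.1 ≠ 0 := polyEmb_ne_zero P.2.2.ne_zero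
  rw [cubeInv, inv_pow, zero_add, pow_one] at h1
  refine eq_inv_of_mul_eq_one_left ?_
  field_simp at h1
  linear_combination h1

/-! ### Passage to the limit -/

/-- The elementary symmetric functions of the inverses of the nonzero polynomials of degree less
than `d`, read off from the coefficients of `carl d`. -/
lemma symm_inv (d : ℕ) : ∃ E : Polynomial 𝕂,
    E = ∏ a ∈ (smallPoly d).erase 0, (1 + C (φ a)⁻¹ * X) ∧ φ (co d).1 ≠ 0 ∧
      φ (co d).1 * E.coeff 1 = φ (co d).2.1 ∧ φ (co d).1 * E.coeff 3 = φ (co d).2.2 ∧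
      E.coeff 2 = 0 ∧ E.coeff 4 = 0 ∧ E.coeff 5 = 0 ∧ E.coeff 6 = 0 := by
  obtain ⟨r, hr⟩ := carl_expand d
  have h0 : (0 : 𝔸) ∈ smallPoly d := by simp [mem_smallPoly]
  have h1 : ∏ a ∈ (smallPoly d).erase 0, (X + C a) =
      C (co d).1 + C (co d).2.1 * X + C (co d).2.2 * X ^ 3 + X ^ 7 * r := by
    apply mul_left_cancel₀ (X_ne_zero : (X : Polynomial 𝔸) ≠ 0)
    have := prod_smallPoly d
    rw [← Finset.mul_prod_erase _ _ h0, map_zero, add_zero, hr] at this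
    rw [this]
    ring
  set E : Polynomial 𝕂 := ∏ a ∈ (smallPoly d).erase 0, (1 + C (φ a)⁻¹ * X) with hE
  set P : 𝕂 := ∏ a ∈ (smallPoly d).erase 0, φ a with hP
  have hne : ∀ a ∈ (smallPoly d).erase 0, φ a ≠ 0 := fun a ha =>
    polyEmb_ne_zero (Finset.ne_of_mem_erase ha)
  have hP0 : P ≠ 0 := Finset.prod_ne_zero_iff.2 hne
  have h2 : C P * E = C (φ (co d).1) + C (φ (co d).2.1) * X + C (φ (co d).2.2) * X ^ 3 +
      X ^ 7 * r.map φ := by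
    have := congrArg (Polynomial.map φ) h1
    simp only [Polynomial.map_prod, Polynomial.map_add, Polynomial.map_mul, Polynomial.map_pow,
      map_X, map_C] at this
    rw [← this, hP, map_prod, hE, ← Finset.prod_mul_distrib]
    refine Finset.prod_congr rfl fun a ha => ?_
    rw [mul_add, ← mul_assoc, ← C_mul, mul_inv_cancel₀ (hne a ha)]
    simp [add_comm]
  have hc : ∀ k, P * E.coeff k = (C (φ (co d).1) + C (φ (co d).2.1) * X +
      C (φ (co d).2.2) * X ^ 3 + X ^ 7 * r.map φ).coeff k := fun k => by rw [← h2, coeff_C_mul]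
  have hPA : P = φ (co d).1 := by
    have := hc 0
    rw [coeff_zero_prod, mul_one] at this
    simpa [coeff_X_pow_mul'] using this
  rw [hPA] at hc hP0
  have hz : ∀ k, φ (co d).1 * E.coeff k = 0 → E.coeff k = 0 := fun k h =>
    (mul_eq_zero.1 h).resolve_left hP0
  refine ⟨E, rfl, hP0, ?_, ?_, hz 2 ?_, hz 4 ?_, hz 5 ?_, hz 6 ?_⟩ <;>
    simp [hc, coeff_X_pow_mul', coeff_C, coeff_X_pow]

/-- The partial sum of `zetaThree` over polynomials of degree less than `d`. -/
noncomputable def zetaPart (d : ℕ) : 𝕂 := ∑ a ∈ smallPoly d, cubeInv a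

/-- The partial sum of `pairSum` over polynomials of degree less than `d`. -/
noncomputable def pairPart (d : ℕ) : 𝕂 :=
  ∑ p ∈ smallPoly d ×ˢ smallPoly d, if enc p.1 < enc p.2 then cubeInv (p.1 * p.2) else 0

lemma zetaPart_eq (d : ℕ) : zetaPart d = ∑ a ∈ (smallPoly d).erase 0, (φ a)⁻¹ ^ 3 :=
  (Finset.sum_erase _ cubeInv_zero).symm

lemma pairPart_eq (d : ℕ) : pairPart d = ∑ p ∈ (smallPoly d).erase 0 ×ˢ (smallPoly d).erase 0,
    if enc p.1 < enc p.2 then ((φ p.1)⁻¹ * (φ p.2)⁻¹) ^ 3 else 0 := by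
  rw [pairPart]
  symm
  have : ∀ p : 𝔸 × 𝔸, ((φ p.1)⁻¹ * (φ p.2)⁻¹) ^ 3 = cubeInv (p.1 * p.2) := fun p => by
    rw [cubeInv_mul, cubeInv, cubeInv, mul_pow]
  simp only [this]
  refine Finset.sum_subset (Finset.product_subset_product (Finset.erase_subset _ _)
    (Finset.erase_subset _ _)) fun p hp hp' => ?_
  have h0 : p.1 * p.2 = 0 := by
    by_contra h
    rw [Finset.mem_product] at hp
    exact hp' (Finset.mem_product.2 ⟨Finset.mem_erase.2 ⟨left_ne_zero_of_mul h, hp.1⟩,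
      Finset.mem_erase.2 ⟨right_ne_zero_of_mul h, hp.2⟩⟩)
  rw [h0, cubeInv_zero, ite_self]

lemma part_relation (d : ℕ) :
    zetaPart (d + 2) ^ 2 * φ (br (d + 1)) ^ 8 = pairPart (d + 2) *
      (φ (X ^ 2 + X + 1) * φ (br (d + 2)) ^ 2 + φ (br (d + 1)) ^ 4) ^ 2 := by
  obtain ⟨E, hE, hA, h1, h3, h2, h4, h5, h6⟩ := symm_inv (d + 2)
  have hS := sum_cubes (fun a : 𝔸 => (φ a)⁻¹) _ E hE
  have hP := sum_pairs_cubes enc enc_injective (fun a : 𝔸 => (φ a)⁻¹) _ E hE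
  rw [← zetaPart_eq, h2] at hS
  rw [← pairPart_eq, h2, h4, h5, h6] at hP
  have hrel := congrArg φ (co_relation d)
  simp only [map_mul, map_pow φ (co _).1, map_pow φ (co _).2.1, map_pow φ (br _)] at hrel
  rw [← h1, ← h3] at hrel
  have hc : E.coeff 1 ^ 3 * φ (br (d + 1)) ^ 4 =
      φ (X ^ 2 + X + 1) * φ (br (d + 2)) ^ 2 * E.coeff 3 := by
    apply mul_left_cancel₀ (pow_ne_zero 3 hA)
    linear_combination hrel
  have hS' : zetaPart (d + 2) = E.coeff 1 ^ 3 + E.coeff 3 := by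
    linear_combination hS + E.coeff 3 * two_eq_zero_K
  have hP' : pairPart (d + 2) = E.coeff 3 ^ 2 := by
    linear_combination hP + E.coeff 3 ^ 2 * two_eq_zero_K
  have hkey : zetaPart (d + 2) * φ (br (d + 1)) ^ 4 =
      E.coeff 3 * (φ (X ^ 2 + X + 1) * φ (br (d + 2)) ^ 2 + φ (br (d + 1)) ^ 4) := by
    rw [hS']
    linear_combination hc
  rw [hP', ← mul_pow, ← hkey]
  ring

lemma natDegree_br (d : ℕ) : (br (d + 1)).natDegree = 2 ^ (d + 1) := by
  have h : 1 < 2 ^ (d + 1) := Nat.one_lt_two_pow (Nat.succ_ne_zero d)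
  rw [br, natDegree_add_eq_left_of_natDegree_lt (by simp), natDegree_X_pow]

lemma br_ne_zero (d : ℕ) : br (d + 1) ≠ 0 := by
  intro h
  have := natDegree_br d
  rw [h, natDegree_zero] at this
  exact absurd this.symm (by positivity)

open Filter Topology

lemma tendsto_inv_br : Tendsto (fun d => (φ (br (d + 1)))⁻¹) atTop (𝓝 0) := by
  refine hasBasis_nhds_zero.tendsto_right_iff.2 fun N _ => ?_
  filter_upwards [eventually_ge_atTop N] with d hd
  rw [map_inv₀, val_poly (br_ne_zero d), ← WithZero.exp_neg,
    WithZero.exp_lt_exp, natDegree_br]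
  have : N < 2 ^ (d + 1) := by
    calc N < d + 1 := by omega
      _ < 2 ^ (d + 1) := Nat.lt_two_pow_self
  push_cast
  have : (N : ℤ) < 2 ^ (d + 1) := by exact_mod_cast this
  omega

lemma smallPoly_mono : Monotone smallPoly := fun d e h a ha => by
  rw [mem_smallPoly] at ha ⊢
  exact ha.trans_le (by exact_mod_cast h)

lemma mem_smallPoly_of_le {a : 𝔸} {d : ℕ} (h : a.natDegree ≤ d) : a ∈ smallPoly (d + 1) := by
  rw [mem_smallPoly]
  exact degree_le_natDegree.trans_lt (by exact_mod_cast Nat.lt_succ_of_le h)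

lemma tendsto_smallPoly : Tendsto smallPoly atTop atTop :=
  tendsto_atTop_finset_of_monotone smallPoly_mono fun _ => ⟨_, mem_smallPoly_of_le le_rfl⟩

lemma tendsto_smallPoly_prod : Tendsto (fun d => smallPoly d ×ˢ smallPoly d) atTop atTop :=
  tendsto_atTop_finset_of_monotone
    (fun _ _ h => Finset.product_subset_product (smallPoly_mono h) (smallPoly_mono h)) fun _ =>
      ⟨_, Finset.mem_product.2
        ⟨mem_smallPoly_of_le (le_max_left _ _), mem_smallPoly_of_le (le_max_right _ _)⟩⟩

lemma tendsto_zetaPart : Tendsto (fun d => zetaPart (d + 2)) atTop (𝓝 zetaThree) :=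
  (tendsto_add_atTop_iff_nat (f := zetaPart) 2).2
    (summable_cubeInv.hasSum.comp tendsto_smallPoly)

lemma tendsto_pairPart : Tendsto (fun d => pairPart (d + 2)) atTop (𝓝 pairSum) :=
  (tendsto_add_atTop_iff_nat (f := pairPart) 2).2 (hasSum_pairSum.comp tendsto_smallPoly_prod)

lemma limit_relation {R : Type*} [CommRing R] [TopologicalSpace R] [IsTopologicalRing R]
    [T2Space R] {z e x : ℕ → R} {Z E : R} (u w : R) (hz : Tendsto z atTop (𝓝 Z))
    (he : Tendsto e atTop (𝓝 E)) (hx : Tendsto x atTop (𝓝 0))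
    (h : ∀ d, z d ^ 2 = e d * (w * (1 + u * x d ^ 2) ^ 2 + 1) ^ 2) :
    Z ^ 2 = E * (w + 1) ^ 2 := by
  have hratio : Tendsto (fun d => 1 + u * x d ^ 2) atTop (𝓝 1) := by
    simpa using ((hx.pow 2).const_mul u).const_add 1
  have hlim := he.mul ((((hratio.pow 2).const_mul w).add_const 1).pow 2)
  simp only [← h, one_pow, mul_one] at hlim
  exact tendsto_nhds_unique (hz.pow 2) hlim

/-- The limit of `part_relation`: the ratio `br (d + 2) / br (d + 1) ^ 2` tends to `1`. -/
lemma pairSum_mul : pairSum * φ (X ^ 2 + X) ^ 2 = zetaThree ^ 2 := by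
  have heq : ∀ d, zetaPart (d + 2) ^ 2 = pairPart (d + 2) * (φ (X ^ 2 + X + 1) *
      (1 + φ (X ^ 2 + X) * (φ (br (d + 1)))⁻¹ ^ 2) ^ 2 + 1) ^ 2 := by
    intro d
    have h0 := polyEmb_ne_zero (br_ne_zero d)
    have h := part_relation d
    have hb : φ (br (d + 2)) = φ (br (d + 1)) ^ 2 + φ (X ^ 2 + X) := by
      rw [br_succ (d + 1), add_assoc, map_add, map_pow]
    rw [hb] at h
    generalize φ (br (d + 1)) = b at h h0
    generalize zetaPart (d + 2) = z at h
    generalize pairPart (d + 2) = e at h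
    generalize φ (X ^ 2 + X + 1) = w at h
    generalize φ (X ^ 2 + X) = u at h
    field_simp
    linear_combination h
  have hx : (X ^ 2 + X + 1 : 𝔸) + 1 = X ^ 2 + X := by
    linear_combination two_eq_zero_A
  have h := limit_relation _ _ tendsto_zetaPart tendsto_pairPart tendsto_inv_br heq
  rw [h, ← map_one φ, ← map_add, hx]

/-- The term `n = 1` dominates. -/
lemma val_zetaPart (d : ℕ) : val (zetaPart (d + 2)) = 1 := by
  have h1 : (1 : 𝔸) ∈ smallPoly (d + 2) := by
    rw [mem_smallPoly, degree_one]
    exact_mod_cast Nat.succ_pos _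
  have hone : val (cubeInv 1) = 1 := by simp [cubeInv]
  have hlt : val (∑ a ∈ (smallPoly (d + 2)).erase 1, cubeInv a) < val (cubeInv 1) := by
    rw [hone]
    refine Valuation.map_sum_lt _ one_ne_zero fun a ha => ?_
    by_cases h0 : a = 0
    · simp [h0, cubeInv_zero]
    · rw [val_cubeInv h0, ← WithZero.exp_zero, WithZero.exp_lt_exp]
      have : a.natDegree ≠ 0 := fun h => Finset.ne_of_mem_erase ha
        ((monic_of_ne_zero h0).natDegree_eq_zero.1 h)
      omega
  rw [zetaPart, ← Finset.add_sum_erase _ _ h1, Valuation.map_add_eq_of_lt_left _ hlt, hone]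

lemma zetaThree_ne_zero : zetaThree ≠ 0 := by
  intro h
  have ht := tendsto_zetaPart
  rw [h] at ht
  obtain ⟨d, hd⟩ := (hasBasis_nhds_zero.tendsto_right_iff.1 ht 0 trivial).exists
  rw [Set.mem_ofPred_eq, val_zetaPart] at hd
  simp at hd

end ThakurSum

/-- In `F₂[T]`, the sum `∑_{P ∈ 𝒫₁} 1/(P³ - 1)` over all monic irreducible polynomials,
taken in `K̂ = F₂((T⁻¹))`, equals `1/(T⁴ + T²)`. -/
theorem thakur_sum_char_two_cube_eq :
    ∑' P : {P : Polynomial (ZMod 2) // P.Monic ∧ Irreducible P},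
      ((polyEmb (ZMod 2) (P : Polynomial (ZMod 2))) ^ 3 - 1)⁻¹
      = (TT (ZMod 2) ^ 4 + TT (ZMod 2) ^ 2)⁻¹ := by
  have h1 := ThakurSum.primePowers_mul_sq
  rw [ThakurSum.tsum_primePowers, ← ThakurSum.pairSum_mul] at h1
  have hz : ThakurSum.pairSum ≠ 0 := fun h => ThakurSum.zetaThree_ne_zero (by
    rw [← pow_eq_zero_iff two_ne_zero, ← ThakurSum.pairSum_mul, h, zero_mul])
  have hT : polyEmb (ZMod 2) (X ^ 2 + X) = TT (ZMod 2) ^ 2 + TT (ZMod 2) := by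
    simp [polyEmb]
  rw [hT] at h1
  refine eq_inv_of_mul_eq_one_left (mul_left_cancel₀ hz ?_)
  linear_combination h1 - (∑' P : {P : Polynomial (ZMod 2) // P.Monic ∧ Irreducible P},
      ((polyEmb (ZMod 2) (P : Polynomial (ZMod 2))) ^ 3 - 1)⁻¹) * ThakurSum.pairSum *
        TT (ZMod 2) ^ 3 * ThakurSum.two_eq_zero_K
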